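/- The graph K is constructible; moreover, x is the only vertex of K that is dominated by some other vertex of K, and y is the only vertex of K that dominates x. -/

import Mathlib

universe u

/-- `y` dominates `x` in `G`: `y ≠ x` and the closed neighbourhood of `x` is contained
in the closed neighbourhood of `y`. -/
def Dominates {V : Type u} (G : SimpleGraph V) (y x : V) : Prop :=
  y ≠ x ∧ ∀ z : V, (z = x ∨ G.Adj x z) → (z = y ∨ G.Adj y z)

/-- `y` dominates `x` in the subgraph of `G` induced by `S`. -/
def DominatesOn {V : Type u} (G : SimpleGraph V) (S : Set V) (y x : V) : Prop :=
  y ≠ x ∧ ∀ z ∈ S, (z = x ∨ G.Adj x z) → (z = y ∨ G.Adj y z)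

/-- `r` (a well-order on `V`) is a construction order for `G`: every non-root vertex `x`
(i.e. one with a strictly earlier vertex) is dominated, in the subgraph induced by the
vertices up to and including `x`, by some strictly earlier vertex. -/
def ConstructionOrderSpec {V : Type u} (G : SimpleGraph V) (r : V → V → Prop) : Prop :=
  ∀ x : V, (∃ y, r y x) → ∃ y, r y x ∧ DominatesOn G {z | r z x ∨ z = x} y x

/-- A graph is constructible if it has a construction order. -/
def Constructible {V : Type u} (G : SimpleGraph V) : Prop :=
  ∃ r : V → V → Prop, IsWellOrder V r ∧ ConstructionOrderSpec G r

/-- The vertices of the graph `K`. -/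
inductive KVert : Type
  | x | y | z | z' | t | t' | w
deriving DecidableEq

open KVert in
/-- The edges of the graph `K`: xy, xt, xt', yz, yz', yt, yt', zz', zt, zw, z't', z'w, tw, t'w. -/
def KRel : KVert → KVert → Prop := fun a b =>
  (a, b) ∈ ([(x, y), (x, t), (x, t'), (y, z), (y, z'), (y, t), (y, t'), (z, z'), (z, t),
      (z, w), (z', t'), (z', w), (t, w), (t', w)] : List (KVert × KVert))

/-- The graph `K`. -/
def KGraph : SimpleGraph KVert := SimpleGraph.fromRel KRel

/- A vertex `b` dominates `a` exactly when `b` is a neighbour of `a` adjacent to all the other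
neighbours of `a`, that is, when `b` is an isolated vertex of the complement of the link of `a`.
In `K` the link of `y` is a 5-cycle, those of `z` and `z'` are 4-cycles, and those of `t`, `t'` and
`w` are induced paths on four vertices; the complements of these graphs have no isolated vertex.
The link of `x` is the path `t y t'`, whose complement has the single isolated vertex `y`.
The order `z, z', y, w, t, t', x` is a construction order. -/

section Domination

variable {V : Type u} {G : SimpleGraph V} {S : Set V} {a b p q : V}

theorem dominatesOn_iff_adj_and_not_compl_adj (ha : a ∈ S) :
    DominatesOn G S b a ↔ G.Adj a b ∧ ∀ c ∈ S, G.Adj a c → ¬ Gᶜ.Adj b c := by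
  constructor
  · rintro ⟨hne, hdom⟩
    refine ⟨((hdom a ha (.inl rfl)).resolve_left hne.symm).symm, fun c hc hac hbc => ?_⟩
    exact (hdom c hc (.inr hac)).elim hbc.ne' hbc.2
  · rintro ⟨hab, hlink⟩
    refine ⟨hab.ne', fun c hc hac => ?_⟩
    rcases hac with rfl | hac
    · exact .inr hab.symm
    · by_contra! hbc
      exact hlink c hc hac ⟨hbc.1.symm, hbc.2⟩

theorem dominatesOn_univ : DominatesOn G Set.univ b a ↔ Dominates G b a := by
  simp only [DominatesOn, Dominates, Set.mem_univ, true_imp_iff]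

theorem dominates_iff_adj_and_not_compl_adj :
    Dominates G b a ↔ G.Adj a b ∧ ∀ c, G.Adj a c → ¬ Gᶜ.Adj b c := by
  simp only [← dominatesOn_univ, dominatesOn_iff_adj_and_not_compl_adj (Set.mem_univ a),
    Set.mem_univ, true_imp_iff]

theorem Dominates.adj (h : Dominates G b a) : G.Adj a b :=
  (dominates_iff_adj_and_not_compl_adj.mp h).1

theorem Dominates.ne_and_ne_of_compl_adj (h : Dominates G b a) (hp : G.Adj a p) (hq : G.Adj a q)
    (hpq : Gᶜ.Adj p q) : b ≠ p ∧ b ≠ q := by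
  have hlink := (dominates_iff_adj_and_not_compl_adj.mp h).2
  exact ⟨fun hb => hlink q hq (hb ▸ hpq), fun hb => hlink p hp (hb ▸ hpq.symm)⟩

theorem not_dominates_of_adj_iff_of_compl_adj (p p' q q' : V)
    (hlink : ∀ c, G.Adj a c ↔ c = p ∨ c = p' ∨ c = q ∨ c = q')
    (hp : Gᶜ.Adj p p') (hq : Gᶜ.Adj q q') : ¬ Dominates G b a := by
  intro h
  obtain ⟨hbp, hbp'⟩ := h.ne_and_ne_of_compl_adj
    ((hlink p).mpr (by simp)) ((hlink p').mpr (by simp)) hp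
  obtain ⟨hbq, hbq'⟩ := h.ne_and_ne_of_compl_adj
    ((hlink q).mpr (by simp)) ((hlink q').mpr (by simp)) hq
  rcases (hlink b).mp h.adj with hb | hb | hb | hb <;> contradiction

end Domination

section Rank

variable {V : Type u} {α : Type*} {rank : V → α} {parent : V → V} {root : V}

theorem rank_root_le_of_rank_parent_lt [Preorder α] [WellFoundedLT α]
    (hparent : ∀ v ≠ root, rank (parent v) < rank v) (v : V) :
    rank root ≤ rank v := by
  induction v using (InvImage.wf rank wellFounded_lt).induction with
  | _ v ih =>
    rcases eq_or_ne v root with rfl | hv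
    · exact le_rfl
    · exact (ih (parent v) (hparent v hv)).trans (hparent v hv).le

theorem constructible_of_rank_of_parent [LinearOrder α] [WellFoundedLT α] {G : SimpleGraph V}
    (hrank : Function.Injective rank)
    (hparent : ∀ v ≠ root, rank (parent v) < rank v)
    (hdom : ∀ v ≠ root, DominatesOn G {u | rank u ≤ rank v} (parent v) v) :
    Constructible G := by
  refine ⟨rank ⁻¹'o (· < ·), (RelEmbedding.preimage ⟨rank, hrank⟩ (· < ·)).isWellOrder, ?_⟩
  rintro v ⟨u, huv⟩
  have hv : v ≠ root := by
    rintro rfl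
    exact (rank_root_le_of_rank_parent_lt hparent u).not_gt huv
  obtain ⟨hne, hsub⟩ := hdom v hv
  refine ⟨parent v, hparent v hv, hne, fun c hc => hsub c ?_⟩
  rcases hc with hc | rfl
  exacts [hc.le, le_rfl]

end Rank

instance : Fintype KVert where
  elems := {.x, .y, .z, .z', .t, .t', .w}
  complete a := by cases a <;> decide

instance : DecidableRel KRel := fun a b => by
  unfold KRel
  infer_instance

instance : DecidableRel KGraph.Adj :=
  inferInstanceAs (DecidableRel (SimpleGraph.fromRel KRel).Adj)

namespace KGraph

open KVert

/-- The position of a vertex in the construction order `z, z', y, w, t, t', x` of `K`. -/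
def rank (v : KVert) : ℕ :=
  [z, z', y, w, t, t', x].idxOf v

/-- The vertex that dominates a given vertex of `K` at the moment it is added in the order `rank`.
The value at the root `z` is immaterial. -/
def parent : KVert → KVert
  | x => y
  | y => z
  | z => z
  | z' => z
  | t => z
  | t' => z'
  | w => z

theorem rank_injective : Function.Injective rank := by
  unfold Function.Injective
  decide

theorem rank_parent_lt : ∀ v ≠ z, rank (parent v) < rank v := by
  decide

theorem adj_parent : ∀ v ≠ z, KGraph.Adj v (parent v) := by
  decide

theorem not_compl_adj_parent_of_rank_le :
    ∀ v ≠ z, ∀ c, rank c ≤ rank v → KGraph.Adj v c → ¬ KGraphᶜ.Adj (parent v) c := by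
  decide

theorem constructible : Constructible KGraph := by
  refine constructible_of_rank_of_parent rank_injective rank_parent_lt fun v hv => ?_
  have hmem : v ∈ {u | rank u ≤ rank v} := le_refl (rank v)
  exact (dominatesOn_iff_adj_and_not_compl_adj hmem).mpr
    ⟨adj_parent v hv, not_compl_adj_parent_of_rank_le v hv⟩

variable {a b : KVert}

theorem not_dominates_z : ¬ Dominates KGraph b z :=
  not_dominates_of_adj_iff_of_compl_adj y w z' t (by decide) (by decide) (by decide)

theorem not_dominates_z' : ¬ Dominates KGraph b z' :=
  not_dominates_of_adj_iff_of_compl_adj y w z t' (by decide) (by decide) (by decide)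

theorem not_dominates_t : ¬ Dominates KGraph b t :=
  not_dominates_of_adj_iff_of_compl_adj x z y w (by decide) (by decide) (by decide)

theorem not_dominates_t' : ¬ Dominates KGraph b t' :=
  not_dominates_of_adj_iff_of_compl_adj x z' y w (by decide) (by decide) (by decide)

theorem not_dominates_w : ¬ Dominates KGraph b w :=
  not_dominates_of_adj_iff_of_compl_adj t z' z t' (by decide) (by decide) (by decide)

theorem adj_y_iff : KGraph.Adj y b ↔ b = x ∨ b = z ∨ b = z' ∨ b = t ∨ b = t' := by
  revert b
  decide

theorem not_dominates_y : ¬ Dominates KGraph b y := by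
  intro h
  obtain ⟨hx, hz⟩ : b ≠ x ∧ b ≠ z :=
    h.ne_and_ne_of_compl_adj (by decide) (by decide) (by decide)
  obtain ⟨hz', ht⟩ : b ≠ z' ∧ b ≠ t :=
    h.ne_and_ne_of_compl_adj (by decide) (by decide) (by decide)
  obtain ⟨ht', -⟩ : b ≠ t' ∧ b ≠ t :=
    h.ne_and_ne_of_compl_adj (by decide) (by decide) (by decide)
  rcases adj_y_iff.mp h.adj with hb | hb | hb | hb | hb <;> contradiction

theorem adj_x_iff : KGraph.Adj x b ↔ b = y ∨ b = t ∨ b = t' := by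
  revert b
  decide

theorem dominates_x_iff : Dominates KGraph b x ↔ b = y := by
  constructor
  · intro h
    obtain ⟨ht, ht'⟩ : b ≠ t ∧ b ≠ t' :=
      h.ne_and_ne_of_compl_adj (by decide) (by decide) (by decide)
    exact (adj_x_iff.mp h.adj).resolve_right (not_or.mpr ⟨ht, ht'⟩)
  · rintro rfl
    exact dominates_iff_adj_and_not_compl_adj.mpr (by decide)

theorem dominates_iff : Dominates KGraph b a ↔ a = x ∧ b = y := by
  cases a <;> simp [dominates_x_iff, not_dominates_y, not_dominates_z, not_dominates_z',
    not_dominates_t, not_dominates_t', not_dominates_w]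

end KGraph

theorem KGraph_constructible_and_unique_domination :
    Constructible KGraph ∧
    (∀ a b : KVert, Dominates KGraph b a → a = KVert.x) ∧
    (∀ b : KVert, Dominates KGraph b KVert.x → b = KVert.y) :=
  ⟨KGraph.constructible, fun _ _ h => (KGraph.dominates_iff.mp h).1,
    fun _ h => (KGraph.dominates_iff.mp h).2⟩
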